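/- Assume 0 < s̲ < s̄ < 1, E₀ ≠ ∅, and fix ε₀ > 0 such that C_{ε₀} ≠ ∅, and n ∈ ℕ, n ≥ 1. If f ∈ F^∞ belongs to the closure (in the sup-norm metric on F^∞) of F_n = {g ∈ F^∞ : the Lebesgue measure of {c ∈ C_{ε₀} : ∃ λ ∈ E₀ ∩ E_c, G_g(λ,0) = G_g(λ,c) = 0} is at least 1/n}, then there exists a set S ⊂ C_{ε₀} of Lebesgue measure at least 1/n such that for every c ∈ S the system of equations G_f(λ,0) = 0 and G_f(λ,c) = 0 has a solution λ lying in closure(E₀) ∩ closure(E_c). -/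

import Mathlib

/-!
Let `φ(c, λ) = |G_f(λ,0)| + |G_f(λ,c)|` and, for `δ ≥ 0`, let `T_δ` be the set of `c ∈ C_{ε₀}` for which
some `λ ∈ closure E₀` with both cutoffs at `(λ, c)` in `[slo, shi]` has `φ(c, λ) ≤ δ`.

* If `g ∈ F_n` is close to `f` in sup norm then `G_g` is close to `G_f`, so the stationary set of `g`
  is contained in `T_δ`; hence every `T_δ`, `δ > 0`, has measure at least `1/n` (`Gfun_sub_le`).
* `T_δ` is relatively closed in the measurable set `C_{ε₀}`, because `closure E₀` is compact and projection
  along a compact factor is a closed map. In particular `T_δ` is measurable, so no measurability of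
  the stationary sets themselves is needed.
* By compactness in `λ`, `T_0 = ⋂_{δ > 0} T_δ`, and continuity from above of Lebesgue measure gives
  `volume T_0 ≥ 1/n` (`measure_zero_level_ge`).
* In terms of `λ`, `E_c` is an open interval and, when nonempty, its closure is exactly the set on
  which both cutoffs lie in `[slo, shi]`; thus `S = T_0` has the required solutions.
-/

open Set MeasureTheory
open scoped ENNReal

noncomputable section

/-- Cutoff of the match type: m(λ,c). -/
def mcut (u lam c : ℝ) : ℝ := lam * (1 + c) / (lam * (1 + c) + (u - c))

/-- Cutoff of the mismatch type: mm(λ,c). -/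
def mmcut (v lam c : ℝ) : ℝ := lam * (1 - c) / (lam * (1 - c) + (v + c))

/-- Confounding region E_c. -/
def Econf (u v slo shi c : ℝ) : Set ℝ :=
  {lam : ℝ | 0 < lam ∧ mcut u lam c ∈ Ioo slo shi ∧ mmcut v lam c ∈ Ioo slo shi}

/-- The signal class F^∞ on (slo, shi). -/
def Fclass (slo shi : ℝ) : Set (ℝ → ℝ) :=
  {f : ℝ → ℝ | ContinuousOn f (Ioo slo shi)
    ∧ (∀ s ∈ Ioo slo shi, 0 ≤ f s)
    ∧ (∫ s in slo..shi, f s) = 1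
    ∧ (∫ s in slo..shi, f s * (1 - 2 * s) / s) = 0
    ∧ (∃ M : ℝ, ∀ s ∈ Ioo slo shi, |f s| ≤ M)
    ∧ (∃ M : ℝ, ∀ s ∈ Ioo slo shi, |f s * (1 - s) / s| ≤ M)}

/-- G_f(λ,c). -/
def Gfun (p u v slo shi : ℝ) (f : ℝ → ℝ) (lam c : ℝ) : ℝ :=
  p * (∫ s in slo..(mcut u lam c), f s * (1 - 2 * s) / s)
  + (1 - p) * (∫ s in (mmcut v lam c)..shi, f s * (1 - 2 * s) / s)

/-- The shock set C. -/
def Cshock (u v slo shi : ℝ) : Set ℝ :=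
  {c : ℝ | c ≠ 0 ∧ (Econf u v slo shi c).Nonempty}

/-- The meaningful shock set C_{ε₀}. -/
def Ceps (u v slo shi e0 : ℝ) : Set ℝ :=
  Cshock u v slo shi ∩ Ioo (-1 + e0) (u - e0) ∩ Ioo (-v + e0) (1 - e0)

/-- The sup-norm (L∞) distance between two signals on (slo, shi). -/
def supDist (slo shi : ℝ) (f g : ℝ → ℝ) : ℝ :=
  ⨆ s : Ioo slo shi, |f s.1 - g s.1|

/-- `A` is nowhere dense in F^∞ w.r.t. the sup-norm metric: inside every ball of F^∞
there is a smaller ball of F^∞ disjoint from `A`. -/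
def NowhereDenseIn (slo shi : ℝ) (A : Set (ℝ → ℝ)) : Prop :=
  ∀ f ∈ Fclass slo shi, ∀ ε > (0:ℝ), ∃ g ∈ Fclass slo shi,
    supDist slo shi f g < ε ∧ ∃ δ > (0:ℝ), ∀ h ∈ A, ¬ supDist slo shi g h < δ

/-- `A` is meagre (of first category) in F^∞ w.r.t. the sup-norm metric. -/
def MeagreIn (slo shi : ℝ) (A : Set (ℝ → ℝ)) : Prop :=
  ∃ B : ℕ → Set (ℝ → ℝ), (∀ n, NowhereDenseIn slo shi (B n)) ∧ A ⊆ ⋃ n, B n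

/-- `f` lies in the closure of `A` inside F^∞ w.r.t. the sup-norm metric. -/
def InClosureIn (slo shi : ℝ) (A : Set (ℝ → ℝ)) (f : ℝ → ℝ) : Prop :=
  ∀ ε > (0:ℝ), ∃ g ∈ A, supDist slo shi f g < ε

/-- The stationary set S_f of a signal f. -/
def statSet (p u v slo shi e0 : ℝ) (f : ℝ → ℝ) : Set ℝ :=
  {c ∈ Ceps u v slo shi e0 | ∃ lam ∈ Econf u v slo shi 0 ∩ Econf u v slo shi c,
     Gfun p u v slo shi f lam 0 = 0 ∧ Gfun p u v slo shi f lam c = 0}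

/-- F_n : signals whose stationary set has Lebesgue measure at least 1/n. -/
def Fn (p u v slo shi e0 : ℝ) (n : ℕ) : Set (ℝ → ℝ) :=
  {f ∈ Fclass slo shi | (1 : ℝ≥0∞) / n ≤ volume (statSet p u v slo shi e0 f)}

/-- M_λ : shocks in C_{ε₀} whose cutoffs at λ lie in [slo, shi]. -/
def Mset (u v slo shi e0 lam : ℝ) : Set ℝ :=
  {c ∈ Ceps u v slo shi e0 | mcut u lam c ∈ Icc slo shi ∧ mmcut v lam c ∈ Icc slo shi}

/-- λ̲. -/
def lamLo (u v slo shi e0 : ℝ) : ℝ :=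
  min ((u - sSup (Ceps u v slo shi e0)) / (1 + sSup (Ceps u v slo shi e0)))
      ((v + sInf (Ceps u v slo shi e0)) / (1 - sInf (Ceps u v slo shi e0)))

/-- λ̄. -/
def lamHi (u v slo shi e0 : ℝ) : ℝ :=
  max ((u - sInf (Ceps u v slo shi e0)) / (1 + sInf (Ceps u v slo shi e0)))
      ((v + sSup (Ceps u v slo shi e0)) / (1 - sSup (Ceps u v slo shi e0)))

/-- Continuity from above for the sets of parameters `c` at which a continuous function
of `(c, λ)`, restricted to a closed set `Z` with compact `λ`-range, takes a value at most `δ`. -/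
lemma measure_zero_level_ge {U L : Set ℝ} (hU : MeasurableSet U) (hfin : volume U ≠ ∞)
    (hL : IsCompact L) {Z : Set (U × L)} (hZ : IsClosed Z) {φ : U × L → ℝ} (hφ : Continuous φ)
    {a : ℝ≥0∞}
    (h : ∀ δ > (0:ℝ), a ≤ volume (Subtype.val '' (Prod.fst '' {z : U × L | z ∈ Z ∧ φ z ≤ δ}))) :
    a ≤ volume (Subtype.val '' (Prod.fst '' {z : U × L | z ∈ Z ∧ φ z ≤ 0})) := by
  have : CompactSpace L := isCompact_iff_compactSpace.mp hL
  have hclosed : ∀ δ : ℝ, IsClosed {z : U × L | z ∈ Z ∧ φ z ≤ δ} := fun δ =>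
    hZ.inter (isClosed_le hφ continuous_const)
  set T : ℝ → Set ℝ := fun δ => Subtype.val '' (Prod.fst '' {z : U × L | z ∈ Z ∧ φ z ≤ δ}) with hT
  have hmeas : ∀ δ, MeasurableSet (T δ) := fun δ =>
    MeasurableSet.subtype_image hU
      (isClosedMap_fst_of_compactSpace _ (hclosed δ)).measurableSet
  have hmono : Monotone T := by
    intro δ δ' hd
    exact image_mono (image_mono fun z hz => ⟨hz.1, hz.2.trans hd⟩)
  have hanti : Antitone fun k : ℕ => T (1 / ((k:ℝ) + 1)) := fun i j hij =>
    hmono (by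
      have : (i:ℝ) ≤ j := by exact_mod_cast hij
      gcongr)
  have hTU : ∀ δ, T δ ⊆ U := by
    rintro δ _ ⟨c, -, rfl⟩
    exact c.2
  have hsub : ⋂ k : ℕ, T (1 / ((k:ℝ) + 1)) ⊆ T 0 := by
    intro c hc
    rw [mem_iInter] at hc
    have hcU : c ∈ U := hTU _ (hc 0)
    have hc' : ∀ k : ℕ, ∃ l : L, ((⟨c, hcU⟩, l) : U × L) ∈ Z ∧
        φ (⟨c, hcU⟩, l) ≤ 1 / ((k:ℝ) + 1) := by
      intro k
      obtain ⟨_, ⟨⟨d, l⟩, hz, rfl⟩, hd⟩ := hc k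
      have : d = ⟨c, hcU⟩ := Subtype.ext hd
      subst this
      exact ⟨l, hz⟩
    -- the minimum of `φ (c, ·)` over the compact fibre of `Z` is attained and is at most `0`
    have hKc : IsCompact {l : L | ((⟨c, hcU⟩, l) : U × L) ∈ Z} :=
      (hZ.preimage (by fun_prop : Continuous fun l : L => ((⟨c, hcU⟩, l) : U × L))).isCompact
    obtain ⟨l0, hl0, -⟩ := hc' 0
    obtain ⟨l, hl, hmin⟩ := hKc.exists_isMinOn ⟨l0, hl0⟩
      (hφ.comp (by fun_prop : Continuous fun l : L => ((⟨c, hcU⟩, l) : U × L))).continuousOn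
    refine ⟨⟨c, hcU⟩, ⟨(⟨c, hcU⟩, l), ⟨hl, ?_⟩, rfl⟩, rfl⟩
    refine ge_of_tendsto' (tendsto_one_div_add_atTop_nhds_zero_nat (𝕜 := ℝ)) fun k => ?_
    obtain ⟨l', hl', hle⟩ := hc' k
    exact (hmin hl').trans hle
  have hlim : volume (⋂ k : ℕ, T (1 / ((k:ℝ) + 1))) = ⨅ k : ℕ, volume (T (1 / ((k:ℝ) + 1))) :=
    hanti.measure_iInter (fun k => (hmeas _).nullMeasurableSet)
      ⟨0, measure_ne_top_of_subset (hTU _) hfin⟩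
  calc a ≤ ⨅ k : ℕ, volume (T (1 / ((k:ℝ) + 1))) := le_iInf fun k => h _ (by positivity)
    _ = volume (⋂ k : ℕ, T (1 / ((k:ℝ) + 1))) := hlim.symm
    _ ≤ volume (T 0) := measure_mono hsub

/-- A cutoff `λ a / (λ a + b)` exceeds `s` exactly when `λ` exceeds the odds `s / (1 - s)` times
`b / a`. -/
lemma lt_cut_iff {s a b l : ℝ} (hs1 : s < 1) (ha : 0 < a) (hb : 0 < b) (hl : 0 < l) :
    s < l * a / (l * a + b) ↔ s / (1 - s) * (b / a) < l := by
  have h1 : 0 < 1 - s := by linarith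
  rw [lt_div_iff₀ (by positivity), div_mul_div_comm, div_lt_iff₀ (by positivity)]
  constructor <;> intro h <;> nlinarith

lemma cut_lt_iff {s a b l : ℝ} (hs1 : s < 1) (ha : 0 < a) (hb : 0 < b) (hl : 0 < l) :
    l * a / (l * a + b) < s ↔ l < s / (1 - s) * (b / a) := by
  have h1 : 0 < 1 - s := by linarith
  rw [div_lt_iff₀ (by positivity), div_mul_div_comm, lt_div_iff₀ (by positivity)]
  constructor <;> intro h <;> nlinarith

/-- The shocks for which all four payoff terms entering the cutoffs are positive. -/
def Good (u v c : ℝ) : Prop := 0 < 1 + c ∧ 0 < u - c ∧ 0 < 1 - c ∧ 0 < v + c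

/-- Left endpoint of the interval `E_c`. -/
def Aend (u v slo c : ℝ) : ℝ :=
  max (slo / (1 - slo) * ((u - c) / (1 + c))) (slo / (1 - slo) * ((v + c) / (1 - c)))

/-- Right endpoint of the interval `E_c`. -/
def Bend (u v shi c : ℝ) : ℝ :=
  min (shi / (1 - shi) * ((u - c) / (1 + c))) (shi / (1 - shi) * ((v + c) / (1 - c)))

lemma Aend_pos {u v slo c : ℝ} (h0 : 0 < slo) (h1 : slo < 1) (hc : Good u v c) :
    0 < Aend u v slo c := by
  obtain ⟨h2, h3, h4, h5⟩ := hc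
  have : 0 < 1 - slo := by linarith
  exact lt_max_of_lt_left (by positivity)

lemma Econf_eq {u v slo shi c : ℝ} (h0 : 0 < slo) (hss : slo < shi) (h1 : shi < 1)
    (hc : Good u v c) : Econf u v slo shi c = Ioo (Aend u v slo c) (Bend u v shi c) := by
  have hA := Aend_pos h0 (hss.trans h1) hc
  obtain ⟨h2, h3, h4, h5⟩ := hc
  have key : ∀ l, 0 < l → ((mcut u l c ∈ Ioo slo shi ∧ mmcut v l c ∈ Ioo slo shi) ↔
      l ∈ Ioo (Aend u v slo c) (Bend u v shi c)) := by
    intro l hl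
    simp only [mcut, mmcut, mem_Ioo, Aend, Bend, max_lt_iff, lt_min_iff,
      lt_cut_iff (hss.trans h1) h2 h3 hl, lt_cut_iff (hss.trans h1) h4 h5 hl,
      cut_lt_iff h1 h2 h3 hl, cut_lt_iff h1 h4 h5 hl]
    tauto
  ext l
  constructor
  · rintro ⟨hl, h⟩
    exact (key l hl).1 h
  · intro h
    have hl := hA.trans h.1
    exact ⟨hl, (key l hl).2 h⟩

lemma closure_Econf_eq {u v slo shi c : ℝ} (h0 : 0 < slo) (hss : slo < shi) (h1 : shi < 1)
    (hc : Good u v c) (hne : (Econf u v slo shi c).Nonempty) :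
    closure (Econf u v slo shi c) = Icc (Aend u v slo c) (Bend u v shi c) := by
  rw [Econf_eq h0 hss h1 hc] at hne ⊢
  exact closure_Ioo (nonempty_Ioo.1 hne).ne

lemma cuts_mem_Icc_iff {u v slo shi c l : ℝ} (hss : slo < shi) (h1 : shi < 1)
    (hc : Good u v c) (hl : 0 < l) :
    (mcut u l c ∈ Icc slo shi ∧ mmcut v l c ∈ Icc slo shi) ↔
      l ∈ Icc (Aend u v slo c) (Bend u v shi c) := by
  obtain ⟨h2, h3, h4, h5⟩ := hc
  have hs := hss.trans h1
  simp only [mem_Icc, Aend, Bend, max_le_iff, le_min_iff]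
  simp only [mcut, mmcut, ← not_lt, lt_cut_iff h1 h2 h3 hl, lt_cut_iff h1 h4 h5 hl,
    cut_lt_iff hs h2 h3 hl, cut_lt_iff hs h4 h5 hl]
  tauto

lemma Ceps_good {u v slo shi e0 c : ℝ} (he0 : 0 < e0) (hc : c ∈ Ceps u v slo shi e0) :
    Good u v c := by
  obtain ⟨⟨-, h1, h2⟩, h3, h4⟩ := hc
  refine ⟨?_, ?_, ?_, ?_⟩ <;> linarith

lemma measurableSet_Ceps {u v slo shi e0 : ℝ} (h0 : 0 < slo) (hss : slo < shi) (h1 : shi < 1)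
    (he0 : 0 < e0) : MeasurableSet (Ceps u v slo shi e0) := by
  have : Ceps u v slo shi e0 = {c | c ≠ 0} ∩ {c | Aend u v slo c < Bend u v shi c} ∩
      Ioo (-1 + e0) (u - e0) ∩ Ioo (-v + e0) (1 - e0) := by
    ext c
    constructor
    · intro h
      have hg := Ceps_good he0 h
      obtain ⟨⟨⟨h2, h3⟩, h4⟩, h5⟩ := h
      rw [Econf_eq h0 hss h1 hg, nonempty_Ioo] at h3
      exact ⟨⟨⟨h2, h3⟩, h4⟩, h5⟩
    · rintro ⟨⟨⟨h2, h3⟩, h4⟩, h5⟩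
      have hg : Good u v c := by
        obtain ⟨h6, h7⟩ := h4
        obtain ⟨h8, h9⟩ := h5
        refine ⟨?_, ?_, ?_, ?_⟩ <;> linarith
      refine ⟨⟨⟨h2, ?_⟩, h4⟩, h5⟩
      rw [Econf_eq h0 hss h1 hg, nonempty_Ioo]
      exact h3
  rw [this]
  refine ((MeasurableSet.inter ?_ ?_).inter measurableSet_Ioo).inter measurableSet_Ioo
  · exact (measurableSet_singleton (0:ℝ)).compl
  · refine measurableSet_lt ?_ ?_
    · unfold Aend; fun_prop
    · unfold Bend; fun_prop

lemma weight_le {slo shi s : ℝ} (h0 : 0 < slo) (h1 : shi < 1) (hs : s ∈ Ioo slo shi) (x : ℝ) :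
    |x * (1 - 2 * s) / s| ≤ |x| / slo := by
  obtain ⟨h2, h3⟩ := hs
  have hs0 : 0 < s := h0.trans h2
  rw [abs_div, abs_mul, abs_of_pos hs0]
  have : |1 - 2 * s| ≤ 1 := by rw [abs_le]; constructor <;> linarith
  have h4 : |x| * |1 - 2 * s| ≤ |x| := mul_le_of_le_one_right (abs_nonneg x) this
  gcongr

lemma integrableOn_signal {slo shi : ℝ} (h0 : 0 < slo) (h1 : shi < 1) {f : ℝ → ℝ}
    (hf : f ∈ Fclass slo shi) :
    IntegrableOn (fun s => f s * (1 - 2 * s) / s) (Icc slo shi) := by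
  obtain ⟨hcont, -, -, -, ⟨M, hM⟩, -⟩ := hf
  rw [integrableOn_Icc_iff_integrableOn_Ioo]
  have hc : ContinuousOn (fun s => f s * (1 - 2 * s) / s) (Ioo slo shi) :=
    (hcont.mul (by fun_prop)).div continuousOn_id fun s hs => (h0.trans hs.1).ne'
  refine IntegrableOn.of_bound (C := M / slo) (by simp)
    (hc.aestronglyMeasurable measurableSet_Ioo) ?_
  filter_upwards [ae_restrict_mem measurableSet_Ioo] with s hs
  refine (weight_le h0 h1 hs _).trans ?_
  have := hM s hs
  gcongr

lemma abs_sub_le_supDist {slo shi : ℝ} {f g : ℝ → ℝ} (hf : f ∈ Fclass slo shi)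
    (hg : g ∈ Fclass slo shi) {s : ℝ} (hs : s ∈ Ioo slo shi) :
    |f s - g s| ≤ supDist slo shi f g := by
  obtain ⟨-, -, -, -, ⟨M, hM⟩, -⟩ := hf
  obtain ⟨-, -, -, -, ⟨N, hN⟩, -⟩ := hg
  refine le_ciSup (f := fun s : Ioo slo shi => |f s.1 - g s.1|) ⟨M + N, ?_⟩ ⟨s, hs⟩
  rintro _ ⟨t, rfl⟩
  exact (abs_sub _ _).trans (add_le_add (hM t t.2) (hN t t.2))

/-- Sup-norm closeness of signals controls the weighted integrals over subintervals. -/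
lemma integral_sub_le {slo shi : ℝ} (h0 : 0 < slo) (h1 : shi < 1) {f g : ℝ → ℝ}
    (hf : f ∈ Fclass slo shi) (hg : g ∈ Fclass slo shi) {a b : ℝ} (hab : a ≤ b)
    (ha : slo ≤ a) (hb : b ≤ shi) :
    |(∫ s in a..b, f s * (1 - 2 * s) / s) - ∫ s in a..b, g s * (1 - 2 * s) / s|
      ≤ supDist slo shi f g / slo := by
  have hsub : uIcc a b ⊆ Icc slo shi := by
    rw [uIcc_of_le hab]
    exact Icc_subset_Icc ha hb
  have hfi := ((integrableOn_signal h0 h1 hf).mono_set hsub).intervalIntegrable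
  have hgi := ((integrableOn_signal h0 h1 hg).mono_set hsub).intervalIntegrable
  have hd0 : 0 ≤ supDist slo shi f g := Real.iSup_nonneg fun _ => abs_nonneg _
  rw [← intervalIntegral.integral_sub hfi hgi]
  have hae : ∀ᵐ x : ℝ, x ∈ uIoc a b →
      ‖f x * (1 - 2 * x) / x - g x * (1 - 2 * x) / x‖ ≤ supDist slo shi f g / slo := by
    -- the right endpoint `shi`, where the signals are unconstrained, is a null set
    have hne : ∀ᵐ x : ℝ, x ≠ shi := by simp [ae_iff]
    filter_upwards [hne] with x hx hxm
    rw [uIoc_of_le hab] at hxm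
    have hxs : x ∈ Ioo slo shi := ⟨ha.trans_lt hxm.1, lt_of_le_of_ne (hxm.2.trans hb) hx⟩
    have : f x * (1 - 2 * x) / x - g x * (1 - 2 * x) / x = (f x - g x) * (1 - 2 * x) / x := by ring
    rw [this]
    refine (weight_le h0 h1 hxs _).trans ?_
    have := abs_sub_le_supDist hf hg hxs
    gcongr
  refine (intervalIntegral.norm_integral_le_of_norm_le_const_ae hae).trans ?_
  have h2 : |b - a| ≤ 1 := by rw [abs_of_nonneg (by linarith)]; linarith
  exact mul_le_of_le_one_right (by positivity) h2

lemma Gfun_sub_le {p u v slo shi l c : ℝ} (hp : p ∈ Ioo (0:ℝ) 1) (h0 : 0 < slo) (h1 : shi < 1)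
    {f g : ℝ → ℝ} (hf : f ∈ Fclass slo shi) (hg : g ∈ Fclass slo shi)
    (hl : l ∈ Econf u v slo shi c) :
    |Gfun p u v slo shi f l c - Gfun p u v slo shi g l c| ≤ supDist slo shi f g / slo := by
  obtain ⟨-, hm, hmm⟩ := hl
  have e1 := integral_sub_le h0 h1 hf hg hm.1.le le_rfl hm.2.le
  have e2 := integral_sub_le h0 h1 hf hg hmm.2.le hmm.1.le le_rfl
  rw [abs_le] at e1 e2 ⊢
  unfold Gfun
  constructor <;> nlinarith [hp.1, hp.2]

/-- The function `G_f` with the two integrals extended constantly outside `[slo, shi]`; it is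
continuous everywhere the cutoffs are, and agrees with `G_f` where the cutoffs are in
`[slo, shi]`. -/
def Gext (p u v slo shi : ℝ) (hss : slo ≤ shi) (f : ℝ → ℝ) (lam c : ℝ) : ℝ :=
  p * IccExtend hss ((Icc slo shi).domRestrict fun x => ∫ s in slo..x, f s * (1 - 2 * s) / s)
      (mcut u lam c)
  + (1 - p) * IccExtend hss ((Icc slo shi).domRestrict fun x => ∫ s in x..shi, f s * (1 - 2 * s) / s)
      (mmcut v lam c)

lemma Gext_eq {p u v slo shi : ℝ} (hss : slo ≤ shi) {f : ℝ → ℝ} {l c : ℝ}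
    (hm : mcut u l c ∈ Icc slo shi) (hmm : mmcut v l c ∈ Icc slo shi) :
    Gext p u v slo shi hss f l c = Gfun p u v slo shi f l c := by
  unfold Gext Gfun
  rw [IccExtend_of_mem _ _ hm, IccExtend_of_mem _ _ hmm]
  rfl

lemma continuous_Gext {X : Type*} [TopologicalSpace X] {p u v slo shi : ℝ} (hss : slo ≤ shi)
    (h0 : 0 < slo) (h1 : shi < 1) {f : ℝ → ℝ} (hf : f ∈ Fclass slo shi) {l c : X → ℝ}
    (hm : Continuous fun x => mcut u (l x) (c x)) (hmm : Continuous fun x => mmcut v (l x) (c x)) :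
    Continuous fun x => Gext p u v slo shi hss f (l x) (c x) := by
  have hi := integrableOn_signal h0 h1 hf
  rw [← uIcc_of_le hss] at hi
  have c1 := intervalIntegral.continuousOn_primitive_interval hi
  have c2 := intervalIntegral.continuousOn_primitive_interval_left hi
  rw [uIcc_of_le hss] at c1 c2
  unfold Gext
  exact (continuous_const.mul (c1.domRestrict.Icc_extend'.comp hm)).add
    (continuous_const.mul (c2.domRestrict.Icc_extend'.comp hmm))

lemma continuous_mcut {X : Type*} [TopologicalSpace X] {u v : ℝ} {l c : X → ℝ}
    (hl : Continuous l) (hc : Continuous c) (hg : ∀ x, Good u v (c x)) (hl0 : ∀ x, 0 < l x) :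
    Continuous fun x => mcut u (l x) (c x) := by
  unfold mcut
  refine Continuous.div (by fun_prop) (by fun_prop) fun x => ?_
  obtain ⟨h2, h3, -, -⟩ := hg x
  have := hl0 x
  positivity

lemma continuous_mmcut {X : Type*} [TopologicalSpace X] {u v : ℝ} {l c : X → ℝ}
    (hl : Continuous l) (hc : Continuous c) (hg : ∀ x, Good u v (c x)) (hl0 : ∀ x, 0 < l x) :
    Continuous fun x => mmcut v (l x) (c x) := by
  unfold mmcut
  refine Continuous.div (by fun_prop) (by fun_prop) fun x => ?_
  obtain ⟨-, -, h2, h3⟩ := hg x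
  have := hl0 x
  positivity

/-- description of the closure of F_n in F^∞ (strongly bounded case). -/
theorem closure_of_Fn
    (p u v slo shi e0 : ℝ) (n : ℕ)
    (hp : p ∈ Ioo (0:ℝ) 1) (hu : 0 < u) (hv : 0 < v) (huv : u ≠ v)
    (hslo : 0 < slo) (hss : slo < shi) (hshi : shi < 1)
    (hE0 : (Econf u v slo shi 0).Nonempty)
    (he0 : 0 < e0) (hC : (Ceps u v slo shi e0).Nonempty)
    (hn : 1 ≤ n)
    (f : ℝ → ℝ) (hf : f ∈ Fclass slo shi)
    (hcl : InClosureIn slo shi (Fn p u v slo shi e0 n) f) :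
    ∃ S ⊆ Ceps u v slo shi e0, (1 : ℝ≥0∞) / n ≤ volume S ∧
      ∀ c ∈ S, ∃ lam ∈ closure (Econf u v slo shi 0) ∩ closure (Econf u v slo shi c),
        Gfun p u v slo shi f lam 0 = 0 ∧ Gfun p u v slo shi f lam c = 0 := by
  have hgood0 : Good u v 0 := ⟨by norm_num, by linarith, by norm_num, by linarith⟩
  set U := Ceps u v slo shi e0 with hUdef
  set L := Icc (Aend u v slo 0) (Bend u v shi 0) with hLdef
  have hA0 := Aend_pos hslo (hss.trans hshi) hgood0
  have hcl0 := closure_Econf_eq hslo hss hshi hgood0 hE0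
  have hfin : volume U ≠ ∞ :=
    measure_ne_top_of_subset (show U ⊆ Ioo (-v + e0) (1 - e0) from fun c hc => hc.2) (by simp)
  have hgood : ∀ z : U × L, Good u v z.1.1 := fun z => Ceps_good he0 z.1.2
  have hpos : ∀ z : U × L, 0 < z.2.1 := fun z => hA0.trans_le z.2.2.1
  have cl : Continuous fun z : U × L => z.2.1 := by fun_prop
  have cc : Continuous fun z : U × L => z.1.1 := by fun_prop
  have c0 : Continuous fun _ : U × L => (0:ℝ) := continuous_const
  have hm := continuous_mcut cl cc hgood hpos
  have hmm := continuous_mmcut cl cc hgood hpos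
  have hm0 := continuous_mcut cl c0 (fun _ => hgood0) hpos
  have hmm0 := continuous_mmcut cl c0 (fun _ => hgood0) hpos
  let Z : Set (U × L) :=
    {z | mcut u z.2.1 z.1.1 ∈ Icc slo shi ∧ mmcut v z.2.1 z.1.1 ∈ Icc slo shi}
  have hZ : IsClosed Z := (isClosed_Icc.preimage hm).inter (isClosed_Icc.preimage hmm)
  let φ : U × L → ℝ := fun z => |Gext p u v slo shi hss.le f z.2.1 0| +
    |Gext p u v slo shi hss.le f z.2.1 z.1.1|
  have hφ : Continuous φ :=
    (continuous_Gext hss.le hslo hshi hf hm0 hmm0).abs.add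
      (continuous_Gext hss.le hslo hshi hf hm hmm).abs
  have hφeq : ∀ z ∈ Z, φ z = |Gfun p u v slo shi f z.2.1 0| +
      |Gfun p u v slo shi f z.2.1 z.1.1| := by
    intro z hz
    obtain ⟨h2, h3⟩ := (cuts_mem_Icc_iff hss hshi hgood0 (hpos z)).2 z.2.2
    simp only [φ]
    rw [Gext_eq hss.le h2 h3, Gext_eq hss.le hz.1 hz.2]
  refine ⟨Subtype.val '' (Prod.fst '' {z : U × L | z ∈ Z ∧ φ z ≤ 0}), ?_, ?_, ?_⟩
  · rintro _ ⟨c, -, rfl⟩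
    exact c.2
  · refine measure_zero_level_ge (measurableSet_Ceps hslo hss hshi he0) hfin isCompact_Icc hZ hφ ?_
    intro δ hδ
    -- `φ` is a sum of two terms, each at most `supDist f g / slo`
    obtain ⟨g, ⟨hg, hgvol⟩, hfg⟩ := hcl (δ * slo / 2) (by positivity)
    refine hgvol.trans (measure_mono ?_)
    rintro c ⟨hcU, l, ⟨hl0, hlc⟩, hG0, hGc⟩
    have hlL : l ∈ L := by
      rw [hLdef, ← hcl0]
      exact subset_closure hl0
    have hzZ : ((⟨c, hcU⟩, ⟨l, hlL⟩) : U × L) ∈ Z :=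
      ⟨Ioo_subset_Icc_self hlc.2.1, Ioo_subset_Icc_self hlc.2.2⟩
    refine ⟨⟨c, hcU⟩, ⟨(⟨c, hcU⟩, ⟨l, hlL⟩), ⟨hzZ, ?_⟩, rfl⟩, rfl⟩
    rw [hφeq _ hzZ]
    have e1 := Gfun_sub_le hp hslo hshi hf hg hl0
    have e2 := Gfun_sub_le hp hslo hshi hf hg hlc
    rw [hG0, sub_zero] at e1
    rw [hGc, sub_zero] at e2
    have e3 : supDist slo shi f g / slo ≤ δ / 2 := by
      rw [div_le_iff₀ hslo]
      linarith
    dsimp only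
    linarith
  · rintro _ ⟨_, ⟨⟨⟨c, hcU⟩, ⟨l, hlL⟩⟩, ⟨hzZ, hz0⟩, rfl⟩, rfl⟩
    rw [hφeq _ hzZ] at hz0
    dsimp only at hz0
    have hg := Ceps_good he0 hcU
    have a1 := abs_nonneg (Gfun p u v slo shi f l 0)
    have a2 := abs_nonneg (Gfun p u v slo shi f l c)
    refine ⟨l, ⟨hcl0 ▸ hlL, ?_⟩, abs_eq_zero.1 (by linarith), abs_eq_zero.1 (by linarith)⟩
    rw [closure_Econf_eq hslo hss hshi hg hcU.1.1.2]
    exact (cuts_mem_Icc_iff hss hshi hg (hA0.trans_le hlL.1)).1 hzZ
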